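/- (Control of the paraproduct form by testing.) Let T be a dyadic interval and ℱ a collection of dyadic subintervals of T with T ∈ ℱ satisfying Σ_{F′∈𝔠_ℱ(F)}|F′|_σ ≤ ½|F|_σ for all F ∈ ℱ. Let f ∈ L²(σ) and set α_ℱ(F) := sup_{G∈ℱ: G⊇F} E^σ_G|f|. For each F ∈ ℱ let Λ_F be a finite subset of the corona 𝒞_ℱ(F), each of whose members has children of positive ω-measure, and let λ^F_J be reals with |λ^F_J| ≤ α_ℱ(F) for J ∈ Λ_F. Then for every g ∈ L²(ω), uniformly over truncations of the Hilbert transform, |Σ_{F∈ℱ} ⟨H(1_F σ), Σ_{J∈Λ_F} λ^F_J·Δ_J^ω g⟩_{L²(ω)}| ≤ C·𝔗_H(σ,ω)·‖f‖_{L²(σ)}·‖g‖_{L²(ω)} for a universal constant C. -/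

import Mathlib

open MeasureTheory Set
open scoped ENNReal Classical

noncomputable section

/-- A dyadic interval `[n·2^k, (n+1)·2^k)`. -/
structure DI where
  k : ℤ
  n : ℤ

namespace DI

/-- The underlying set of a dyadic interval. -/
def set (I : DI) : Set ℝ := Set.Ico ((I.n : ℝ) * (2:ℝ) ^ I.k) (((I.n : ℝ) + 1) * (2:ℝ) ^ I.k)

/-- The side length `ℓ(I)`. -/
def len (I : DI) : ℝ := (2:ℝ) ^ I.k

/-- left endpoint -/
def lo (I : DI) : ℝ := (I.n : ℝ) * (2:ℝ) ^ I.k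

/-- right endpoint -/
def hi (I : DI) : ℝ := ((I.n : ℝ) + 1) * (2:ℝ) ^ I.k

/-- center `c_I` -/
def center (I : DI) : ℝ := ((I.n : ℝ) + 1/2) * (2:ℝ) ^ I.k

/-- left dyadic child -/
def left (I : DI) : DI := ⟨I.k - 1, 2 * I.n⟩

/-- right dyadic child -/
def right (I : DI) : DI := ⟨I.k - 1, 2 * I.n + 1⟩

/-- parent interval -/
def parent (I : DI) : DI := ⟨I.k + 1, Int.fdiv I.n 2⟩

/-- m-th ancestor `π^m I` -/
def anc (I : DI) : ℕ → DI
  | 0 => I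
  | (m+1) => (anc I m).parent

/-- distance of `J ⊆ K` to the boundary of `K` -/
def distToBdry (J K : DI) : ℝ := min (J.lo - K.lo) (K.hi - J.hi)

/-- the child of `I` containing `J` (for `J ⊆ I` strictly) -/
def childContaining (I J : DI) : DI := if J.set ⊆ I.left.set then I.left else I.right

/-- the sibling `θ(I_J)` of the child of `I` containing `J` -/
def sibling (I J : DI) : DI := if J.set ⊆ I.left.set then I.right else I.left

end DI

/-- `J` is an `(r,ε)`-good dyadic interval. -/
def IsGood (r : ℕ) (ε : ℝ) (J : DI) : Prop :=
  ∀ K : DI, J.set ⊆ K.set → (2:ℝ) ^ r * J.len ≤ K.len →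
    J.len ^ ε * K.len ^ (1 - ε) / 2 ≤ DI.distToBdry J K

/-- Poisson integral of `μ` relative to an interval with center `c` and length `ℓ`. -/
def poissonI (c ℓ : ℝ) (μ : Measure ℝ) : ℝ≥0∞ :=
  ∫⁻ y, ENNReal.ofReal (ℓ / (ℓ + |y - c|) ^ 2) ∂μ

/-- Poisson integral `P(I, μ)` for a dyadic interval. -/
def DI.poisson (I : DI) (μ : Measure ℝ) : ℝ≥0∞ := poissonI I.center I.len μ

/-- average `E^μ_K f = (1/|K|_μ) ∫_K f dμ` -/
def avg (μ : Measure ℝ) (K : Set ℝ) (f : ℝ → ℝ) : ℝ := (∫ x in K, f x ∂μ) / (μ K).toReal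

/-- martingale (Haar) difference `Δ_I^μ f` -/
def haar (μ : Measure ℝ) (I : DI) (f : ℝ → ℝ) : ℝ → ℝ := fun x =>
  (I.left.set.indicator (fun _ => avg μ I.left.set f)) x
    + (I.right.set.indicator (fun _ => avg μ I.right.set f)) x
    - (I.set.indicator (fun _ => avg μ I.set f)) x

/-- truncated Hilbert transform `H_t(f σ)(x)` -/
def Htr (σ : Measure ℝ) (f : ℝ → ℝ) (t : ℝ) (x : ℝ) : ℝ :=
  ∫ y in {y : ℝ | t < |y - x|}, f y / (y - x) ∂σ

/-- pairing `⟨H_t(f σ), ψ⟩_{L²(ω)}` -/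
def pairH (σ ω : Measure ℝ) (f ψ : ℝ → ℝ) (t : ℝ) : ℝ :=
  ∫ x, Htr σ f t x * ψ x ∂ω

/-- testing characteristic `𝔗_H(σ, ω)`, uniform over truncations -/
def testH (σ ω : Measure ℝ) : ℝ≥0∞ :=
  ⨆ (a : ℝ) (b : ℝ) (_ : a < b) (t : ℝ) (_ : 0 < t),
    eLpNorm (Htr σ ((Set.Ico a b).indicator 1) t) 2 ω / (σ (Set.Ico a b)) ^ (1/2 : ℝ)

/-- operator norm characteristic `𝔑_H(σ, ω)`, uniform over truncations -/
def normH (σ ω : Measure ℝ) : ℝ≥0∞ :=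
  ⨆ (t : ℝ) (_ : 0 < t) (f : ℝ → ℝ) (_ : MeasureTheory.MemLp f 2 σ),
    eLpNorm (Htr σ f t) 2 ω / eLpNorm f 2 σ

/-- two-tailed Muckenhoupt characteristic with holes `𝒜₂^hole(σ, ω)` -/
def A2hole (σ ω : Measure ℝ) : ℝ≥0∞ :=
  ⨆ (a : ℝ) (b : ℝ) (_ : a < b),
    poissonI ((a+b)/2) (b-a) (ω.restrict (Set.Ico a b)ᶜ) * σ (Set.Ico a b) / ENNReal.ofReal (b-a)
      + ω (Set.Ico a b) / ENNReal.ofReal (b-a) * poissonI ((a+b)/2) (b-a) (σ.restrict (Set.Ico a b)ᶜ)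

/-- offset Muckenhoupt characteristic `A₂^offset(σ, ω)` with parameter `r` -/
def A2offset (r : ℕ) (σ ω : Measure ℝ) : ℝ≥0∞ :=
  ⨆ (Q : DI) (Q' : DI) (_ : Disjoint Q.set Q'.set)
    (_ : ¬ Disjoint (closure Q.set) (closure Q'.set))
    (_ : Q'.len ≤ (2:ℝ) ^ r * Q.len) (_ : Q.len ≤ (2:ℝ) ^ r * Q'.len),
    (ω Q'.set / ENNReal.ofReal Q'.len) * (σ Q.set / ENNReal.ofReal Q.len)

/-- energy `E(J,ω)²` -/
def energySq (ω : Measure ℝ) (J : DI) : ℝ≥0∞ :=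
  (∫⁻ x in J.set, ENNReal.ofReal ((x - avg ω J.set (fun z => z)) ^ 2) ∂ω)
    / (ω J.set * ENNReal.ofReal (J.len ^ 2))

/-- energy characteristic `ℰ₂(σ,ω)²` -/
def energyCharSq (σ ω : Measure ℝ) : ℝ≥0∞ :=
  ⨆ (a : ℝ) (b : ℝ) (_ : a < b) (𝒮 : Set DI)
    (_ : ∀ I ∈ 𝒮, DI.set I ⊆ Set.Ico a b)
    (_ : 𝒮.Pairwise fun I I' => Disjoint I.set I'.set),
    (∑' I : 𝒮, (I : DI).poisson (σ.restrict (Set.Ico a b \ (I : DI).set)) ^ 2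
        * energySq ω (I : DI) * ω (I : DI).set) / σ (Set.Ico a b)

/-- `ℱ`-children: maximal members of `ℱ` strictly contained in `F` -/
def fChildren (ℱ : Set DI) (F : DI) : Set DI :=
  {G | G ∈ ℱ ∧ G.set ⊂ F.set ∧ ∀ H ∈ ℱ, H.set ⊂ F.set → G.set ⊆ H.set → H = G}

/-- m-fold iterated `ℱ`-children -/
def fDesc (ℱ : Set DI) : ℕ → DI → Set DI
  | 0, F => {F}
  | (m+1), F => ⋃ G ∈ fChildren ℱ F, fDesc ℱ m G

/-- the corona `𝒞_ℱ(F)` -/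
def corona (ℱ : Set DI) (F : DI) : Set DI :=
  {I | I.set ⊆ F.set ∧ ∀ F' ∈ ℱ, F'.set ⊂ F.set → ¬ I.set ⊆ F'.set}

/-- `ℱ` is σ-Carleson with norm `Cℱ` -/
def IsCarleson (σ : Measure ℝ) (ℱ : Set DI) (Cℱ : ℝ) : Prop :=
  ∀ S ∈ ℱ, ∑' F : {F : DI // F ∈ ℱ ∧ F.set ⊆ S.set}, σ (F : DI).set
    ≤ ENNReal.ofReal Cℱ * σ S.set

/-- `W` is `(r,ε)`-deeply embedded in `F` -/
def deepIn (r : ℕ) (ε : ℝ) (W F : DI) : Prop :=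
  W.set ⊆ F.set ∧ W.len ≤ (2:ℝ) ^ (-(r:ℤ)) * F.len ∧
    W.len ^ ε * F.len ^ (1 - ε) / 2 ≤ DI.distToBdry W F

/-- the `(r,ε)`-Whitney collection `ℳ_{(r,ε)-deep}(F)` -/
def Mdeep (r : ℕ) (ε : ℝ) (F : DI) : Set DI :=
  {W | deepIn r ε W F ∧ ∀ W' : DI, deepIn r ε W' F → W.set ⊆ W'.set → W' = W}

/-- pointwise Haar projection of the identity function onto a collection `𝒮` -/
def projId (ω : Measure ℝ) (𝒮 : Set DI) : ℝ → ℝ :=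
  fun x => ∑' J : 𝒮, haar ω (J : DI) (fun z => z) x

/-- functional energy characteristic `𝔉(σ, ω)` -/
def funcEnergy (r : ℕ) (ε : ℝ) (σ ω : Measure ℝ) : ℝ≥0∞ :=
  ⨆ (ℱ : Set DI) (h : ℝ → ℝ) (_ : MeasureTheory.MemLp h 2 σ) (_ : ∀ x, 0 ≤ h x),
    (∑' F : ℱ, ∑' W : Mdeep r ε (F : DI),
      ((W : DI).poisson
          (((σ.withDensity fun y => ENNReal.ofReal (h y))).restrict ((F : DI).set)ᶜ)
        / ENNReal.ofReal (W : DI).len) ^ 2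
        * ∫⁻ x in (W : DI).set,
            ENNReal.ofReal
              ((projId ω (corona ℱ (F : DI) ∩ {J : DI | J.set ⊆ (W : DI).set}) x) ^ 2) ∂ω)
      ^ (1/2 : ℝ) / eLpNorm h 2 σ

/-- stopping-time suprema `α_ℱ(F)` of averages of `|f|` -/
def alphaF (σ : Measure ℝ) (ℱ : Set DI) (f : ℝ → ℝ) (F : DI) : ℝ :=
  ⨆ G : {G : DI // G ∈ ℱ ∧ F.set ⊆ G.set}, avg σ (G : DI).set (fun x => |f x|)

/-- projection `𝖯_F f = Σ_{K ⊆ F} Δ_K^σ f` (pointwise tsum) -/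
def dyadicProj (σ : Measure ℝ) (F : DI) (f : ℝ → ℝ) : ℝ → ℝ :=
  fun x => ∑' K : {K : DI // K.set ⊆ F.set}, haar σ (K : DI) f x

/-- concentric triple 3K -/
def tripleSet (K : DI) : Set ℝ :=
  Set.Ico (K.center - 3/2 * K.len) (K.center + 3/2 * K.len)

/-- `K` is good, inside `S`, with triple inside `S` -/
def goodTrip (r : ℕ) (ε : ℝ) (S K : DI) : Prop :=
  IsGood r ε K ∧ K.set ⊆ S.set ∧ tripleSet K ⊆ S.set

/-- `𝒲^trip(S) = {S} ∪ ℳ_good^trip(S)` -/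
def Wtrip (r : ℕ) (ε : ℝ) (S : DI) : Set DI :=
  {S} ∪ {K | goodTrip r ε S K ∧ ∀ K' : DI, goodTrip r ε S K' → K.set ⊆ K'.set → K' = K}

/-- refined Poisson-Energy characteristic `PE_𝒜^{A,trip}(Λ; σ, ω)` -/
def PEtrip (r : ℕ) (ε : ℝ) (σ ω : Measure ℝ) (F A : DI) (𝒜 : Set DI) (Λ : Finset DI) : ℝ≥0∞ :=
  ⨆ (S : DI) (_ : S ∈ fChildren 𝒜 A) (K : DI) (_ : K ∈ Wtrip r ε S),
    (K.poisson (σ.restrict (F.set \ S.set)) / ENNReal.ofReal K.len)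
      * (∑ J ∈ Λ, if J.set ⊆ K.set then eLpNorm (haar ω J (fun z => z)) 2 ω ^ 2 else 0)
          ^ (1/2 : ℝ)
      / (σ K.set) ^ (1/2 : ℝ)

/-- Poisson-Energy characteristic `PE^F(𝒞; σ, ω)` -/
def PEchar (r : ℕ) (ε : ℝ) (σ ω : Measure ℝ) (F : DI) (𝒞 : Set DI) : ℝ≥0∞ :=
  ⨆ (I : DI) (_ : I ∈ 𝒞) (_ : IsGood r ε I),
    I.poisson (σ.restrict (F.set \ I.set)) * (energySq ω I) ^ (1/2 : ℝ)
      * (ω I.set / σ I.set) ^ (1/2 : ℝ)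

/-- dual integration operator `I*μ(α) = Σ_{β ⊆ α} μ(β)` -/
def Istar (μ : DI → ℝ) (α : DI) : ℝ := ∑ᶠ β ∈ {β : DI | β.set ⊆ α.set}, μ β

/-- the minimal intervals in the support of `μ` -/
def minSupp (μ : DI → ℝ) : Set DI :=
  {α | μ α ≠ 0 ∧ ∀ β : DI, μ β ≠ 0 → β.set ⊆ α.set → β = α}

/-- `Σ_{β ∈ S, β ⊊ α} I*μ(β)` -/
def stopSum (μ : DI → ℝ) (S : Set DI) (α : DI) : ℝ :=
  ∑ᶠ β ∈ {β ∈ S | β.set ⊂ α.set}, Istar μ β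

/-- stopping criterion relative to a previous antichain `S` -/
def stopProp (μ : DI → ℝ) (Γ : ℝ) (S : Set DI) (α : DI) : Prop :=
  Γ * stopSum μ S α < Istar μ α

/-- the minimal intervals in `𝒟(o)` satisfying the stopping criterion -/
def nextGen (μ : DI → ℝ) (Γ : ℝ) (o : DI) (S : Set DI) : Set DI :=
  {α | α.set ⊆ o.set ∧ stopProp μ Γ S α ∧
    ∀ β : DI, β.set ⊆ o.set → stopProp μ Γ S β → β.set ⊆ α.set → β = α}

/-- `μ` is `Γ`-irreducible -/
def Irreducible' (μ : DI → ℝ) (Γ : ℝ) (o : DI) : Prop :=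
  ¬ ∃ α : DI, α.set ⊆ o.set ∧ stopProp μ Γ (minSupp μ) α

/-- `α_A(S)` for the Stopping Child Lemma -/
def stopAlpha (σ : Measure ℝ) (r : ℕ) (ε : ℝ) (Λf : Finset DI) (f : ℝ → ℝ) (A S : DI) : ℝ :=
  ⨆ I : {I : DI // IsGood r ε I ∧ I.set ⊆ A.set ∧
      ∃ I0 ∈ Λf, S.set ⊆ I0.set ∧ I0.set ⊂ I.set}, |avg σ (I : DI).set f|

namespace DI
lemma eq_of_mem {I J : DI} {x : ℝ} (hI : x ∈ I.set) (hJ : x ∈ J.set) (h : I.k = J.k) : I = J := by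
  obtain ⟨k, n⟩ := I
  obtain ⟨k', m⟩ := J
  simp only at h
  subst h
  simp only [set, Set.mem_Ico] at hI hJ
  have hp : (0:ℝ) < (2:ℝ)^k := by positivity
  have h1 : (n:ℝ) < m + 1 := lt_of_mul_lt_mul_right (hI.1.trans_lt hJ.2) hp.le
  have h2 : (m:ℝ) < n + 1 := lt_of_mul_lt_mul_right (hJ.1.trans_lt hI.2) hp.le
  have h1' : n < m + 1 := by exact_mod_cast h1
  have h2' : m < n + 1 := by exact_mod_cast h2
  have : n = m := by omega
  rw [this]

lemma subset_of_mem {I J : DI} {x : ℝ} (hI : x ∈ I.set) (hJ : x ∈ J.set) (h : I.k ≤ J.k) :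
    I.set ⊆ J.set := by
  obtain ⟨k, n⟩ := I
  obtain ⟨k', m⟩ := J
  simp only at h
  obtain ⟨d, rfl⟩ := Int.le.dest h
  simp only [set, Set.mem_Ico] at hI hJ
  have hp : (0:ℝ) < (2:ℝ)^k := by positivity
  have e : (2:ℝ)^(k + (d:ℤ)) = (2:ℝ)^d * (2:ℝ)^k := by
    rw [zpow_add₀ (by norm_num), zpow_natCast]; ring
  rw [e] at hJ
  have h1 : ((m * 2^d : ℤ):ℝ) < (n + 1 : ℤ) := by
    have := hJ.1.trans_lt hI.2
    rw [← mul_assoc] at this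
    push_cast
    exact lt_of_mul_lt_mul_right this hp.le
  have h2 : ((n : ℤ):ℝ) < ((m+1) * 2^d : ℤ) := by
    have := hI.1.trans_lt hJ.2
    rw [← mul_assoc] at this
    push_cast
    exact lt_of_mul_lt_mul_right this hp.le
  have h1' : m * 2^d ≤ n := by have : m * 2^d < n + 1 := by exact_mod_cast h1
                               omega
  have h2' : n + 1 ≤ (m+1) * 2^d := by have : n < (m+1) * 2^d := by exact_mod_cast h2
                                       omega
  have h1r : (m:ℝ) * 2^d ≤ n := by exact_mod_cast h1'
  have h2r : (n:ℝ) + 1 ≤ (m+1) * 2^d := by exact_mod_cast h2'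
  simp only [set]
  apply Set.Ico_subset_Ico
  · rw [e, ← mul_assoc]; gcongr
  · rw [e, ← mul_assoc]; gcongr

lemma lo_lt (I : DI) : (I.n : ℝ) * (2:ℝ) ^ I.k < ((I.n : ℝ) + 1) * (2:ℝ) ^ I.k := by
  have hp : (0:ℝ) < (2:ℝ)^I.k := by positivity
  gcongr; linarith

lemma lo_mem (I : DI) : (I.n : ℝ) * (2:ℝ) ^ I.k ∈ I.set := ⟨le_rfl, I.lo_lt⟩

lemma k_le {I J : DI} (h : I.set ⊆ J.set) : I.k ≤ J.k := by
  have h' := (Set.Ico_subset_Ico_iff I.lo_lt).1 h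
  have : (2:ℝ)^I.k ≤ (2:ℝ)^J.k := by nlinarith [h'.1, h'.2]
  exact (zpow_le_zpow_iff_right₀ (by norm_num)).1 this

lemma eq_of_set {I J : DI} (h : I.set = J.set) : I = J :=
  eq_of_mem I.lo_mem (h ▸ I.lo_mem) (le_antisymm (k_le h.subset) (k_le h.symm.subset))

lemma k_lt {I J : DI} (h : I.set ⊂ J.set) : I.k < J.k := by
  refine lt_of_le_of_ne (k_le h.subset) fun e => ?_
  have := eq_of_mem I.lo_mem (h.subset I.lo_mem) e
  exact h.ne (by rw [this])

lemma ssubset_of_mem {I J : DI} {x : ℝ} (hI : x ∈ I.set) (hJ : x ∈ J.set) (h : I.k < J.k) :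
    I.set ⊂ J.set :=
  (subset_of_mem hI hJ h.le).ssubset_of_ne fun e => by rw [eq_of_set e] at h; exact lt_irrefl _ h

lemma measurable_set (I : DI) : MeasurableSet I.set := measurableSet_Ico

lemma measure_lt_top (I : DI) (μ : Measure ℝ) [IsLocallyFiniteMeasure μ] : μ I.set < ⊤ :=
  measure_Ico_lt_top

lemma children (I : DI) : I.left.set ∪ I.right.set = I.set ∧ Disjoint I.left.set I.right.set := by
  have e : (2:ℝ)^I.k = 2 * (2:ℝ)^(I.k-1) := by
    rw [zpow_sub₀ (by norm_num)]; norm_num; ring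
  have hp : (0:ℝ) < (2:ℝ)^(I.k-1) := by positivity
  simp only [set, left, right, e]
  push_cast
  constructor
  · rw [show (2 * (I.n:ℝ) + 1 + 1) * (2:ℝ)^(I.k-1) = (I.n+1) * (2 * (2:ℝ)^(I.k-1)) by ring,
      show (2 * (I.n:ℝ)) * (2:ℝ)^(I.k-1) = I.n * (2 * (2:ℝ)^(I.k-1)) by ring]
    apply Set.Ico_union_Ico_eq_Ico <;> nlinarith
  · rw [Set.disjoint_left]
    intro x hx hy
    exact absurd hx.2 (not_lt.2 hy.1)
end DI

/-- number of smaller members through x -/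
def Ncnt (𝒢 : Finset DI) (G : DI) (x : ℝ) : ℕ := (𝒢.filter fun G' => x ∈ G'.set ∧ G'.k < G.k).card

lemma measurable_Ncnt (𝒢 : Finset DI) (G : DI) : Measurable (Ncnt 𝒢 G) := by
  unfold Ncnt
  simp only [Finset.card_filter]
  refine Finset.measurable_fun_sum _ fun G' _ => ?_
  refine Measurable.ite ?_ measurable_const measurable_const
  by_cases h : G'.k < G.k
  · simpa [h] using G'.measurable_set
  · simp [h]

/-- weight -/
def uw (𝒢 : Finset DI) (G : DI) (x : ℝ) : ℝ≥0∞ := (ENNReal.ofReal (6/5)) ^ (Ncnt 𝒢 G x)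

lemma measurable_uw (𝒢 : Finset DI) (G : DI) : Measurable (uw 𝒢 G) :=
  (measurable_from_top (f := fun n : ℕ => (ENNReal.ofReal (6/5)) ^ n)).comp (measurable_Ncnt 𝒢 G)

lemma uw_ptwise {ℱ : Set DI} {𝒢 : Finset DI} (h𝒢 : ∀ G ∈ 𝒢, G ∈ ℱ)
    (hup : ∀ H ∈ ℱ, ∀ C ∈ 𝒢, C.set ⊆ H.set → H ∈ 𝒢) {G : DI} {x : ℝ} (hx : x ∈ G.set) :
    (uw 𝒢 G x)^2 ≤ 1 + ENNReal.ofReal (36/25) * ∑ C ∈ 𝒢.filter (fun C => C ∈ fChildren ℱ G),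
      C.set.indicator (fun y => (uw 𝒢 C y)^2) x := by
  by_cases h0 : (𝒢.filter fun G' => x ∈ G'.set ∧ G'.k < G.k).Nonempty
  · obtain ⟨C, hC, hmax⟩ := Finset.exists_max_image _ (fun C : DI => C.k) h0
    simp only [Finset.mem_filter] at hC hmax
    obtain ⟨hC𝒢, hxC, hCk⟩ := hC
    have hCch : C ∈ fChildren ℱ G := by
      refine ⟨h𝒢 _ hC𝒢, DI.ssubset_of_mem hxC hx hCk, fun H hH hHG hCH => ?_⟩
      have h1 := hmax H ⟨hup H hH C hC𝒢 hCH, hCH hxC, DI.k_lt hHG⟩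
      exact DI.eq_of_mem (hCH hxC) hxC (le_antisymm h1 (DI.k_le hCH))
    have hN : Ncnt 𝒢 G x = Ncnt 𝒢 C x + 1 := by
      unfold Ncnt
      rw [← Finset.card_insert_of_notMem (a := C) (by simp)]
      congr 1
      ext D
      simp only [Finset.mem_filter, Finset.mem_insert]
      constructor
      · rintro ⟨a, b, c⟩
        rcases (hmax D ⟨a, b, c⟩).lt_or_eq with h | h
        · exact Or.inr ⟨a, b, h⟩
        · exact Or.inl (DI.eq_of_mem b hxC h)
      · rintro (rfl | ⟨a, b, c⟩)
        · exact ⟨hC𝒢, hxC, hCk⟩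
        · exact ⟨a, b, c.trans hCk⟩
    have : (uw 𝒢 G x)^2 = ENNReal.ofReal (36/25) * C.set.indicator (fun y => (uw 𝒢 C y)^2) x := by
      rw [Set.indicator_of_mem hxC]
      unfold uw
      rw [hN, pow_succ _ (Ncnt 𝒢 C x), mul_pow, ← ENNReal.ofReal_pow (by norm_num) 2, mul_comm]
      norm_num
    rw [this]
    refine le_trans ?_ le_add_self
    gcongr
    exact Finset.single_le_sum (f := fun C : DI => C.set.indicator (fun y => (uw 𝒢 C y)^2) x)
      (fun _ _ => zero_le) (Finset.mem_filter.2 ⟨hC𝒢, hCch⟩)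
  · rw [Finset.not_nonempty_iff_eq_empty] at h0
    have : uw 𝒢 G x = 1 := by simp [uw, Ncnt, h0]
    rw [this]; simp

lemma uw_int {σ : Measure ℝ} {ℱ : Set DI} {𝒢 : Finset DI} (h𝒢 : ∀ G ∈ 𝒢, G ∈ ℱ)
    (hup : ∀ H ∈ ℱ, ∀ C ∈ 𝒢, C.set ⊆ H.set → H ∈ 𝒢)
    (hch : ∀ G ∈ 𝒢, ∑ C ∈ 𝒢.filter (fun C => C ∈ fChildren ℱ G), σ C.set ≤ σ G.set / 2) :
    ∀ (n : ℕ), ∀ G ∈ 𝒢, (𝒢.filter fun G' => G'.k < G.k).card = n →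
      ∫⁻ x in G.set, (uw 𝒢 G x)^2 ∂σ ≤ 4 * σ G.set := by
  intro n
  induction n using Nat.strong_induction_on with
  | _ n ih =>
  intro G hG hn
  calc ∫⁻ x in G.set, (uw 𝒢 G x)^2 ∂σ
      ≤ ∫⁻ x in G.set, (1 + ENNReal.ofReal (36/25) *
        ∑ C ∈ 𝒢.filter (fun C => C ∈ fChildren ℱ G),
          C.set.indicator (fun y => (uw 𝒢 C y)^2) x) ∂σ :=
        setLIntegral_mono' G.measurable_set fun x hx => uw_ptwise h𝒢 hup hx
    _ ≤ σ G.set + ENNReal.ofReal (36/25) * ∑ C ∈ 𝒢.filter (fun C => C ∈ fChildren ℱ G),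
          ∫⁻ x in C.set, (uw 𝒢 C x)^2 ∂σ := by
        rw [lintegral_add_left measurable_const, lintegral_const_mul, lintegral_finsetSum]
        · simp only [lintegral_one, Measure.restrict_apply MeasurableSet.univ, Set.univ_inter]
          gcongr _ + _ * ?_
          refine Finset.sum_le_sum fun C hC => ?_
          rw [lintegral_indicator C.measurable_set]
          exact lintegral_mono' (Measure.restrict_mono_measure Measure.restrict_le_self _) le_rfl
        · intro C _
          exact ((measurable_uw 𝒢 C).pow_const 2).indicator C.measurable_set
        · refine Finset.measurable_fun_sum _ fun C _ => ?_
          exact ((measurable_uw 𝒢 C).pow_const 2).indicator C.measurable_set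
    _ ≤ σ G.set + ENNReal.ofReal (36/25) * ∑ C ∈ 𝒢.filter (fun C => C ∈ fChildren ℱ G),
          4 * σ C.set := by
        gcongr with C hC
        rw [Finset.mem_filter] at hC
        have hk : C.k < G.k := DI.k_lt hC.2.2.1
        refine ih _ ?_ C hC.1 rfl
        rw [← hn]
        apply Finset.card_lt_card
        rw [Finset.ssubset_iff_of_subset]
        · exact ⟨C, by simp [hC.1, hk], by simp⟩
        · intro D; simp only [Finset.mem_filter]; rintro ⟨a, b⟩; exact ⟨a, b.trans hk⟩
    _ ≤ σ G.set + ENNReal.ofReal (36/25) * (4 * (σ G.set / 2)) := by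
        rw [← Finset.mul_sum]; gcongr; exact hch G hG
    _ ≤ 4 * σ G.set := by
        have e : ENNReal.ofReal (36/25) * (4 * (σ G.set / 2)) = ENNReal.ofReal (72/25) * σ G.set := by
          rw [ENNReal.div_eq_inv_mul, ← mul_assoc, ← mul_assoc]
          congr 1
          rw [show (4:ℝ≥0∞) = ENNReal.ofReal 4 by norm_num,
            show (2:ℝ≥0∞)⁻¹ = ENNReal.ofReal (1/2) by
              rw [one_div, ENNReal.ofReal_inv_of_pos (by norm_num)]; norm_num,
            ← ENNReal.ofReal_mul (by norm_num), ← ENNReal.ofReal_mul (by norm_num)]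
          norm_num
        rw [e]
        calc σ G.set + ENNReal.ofReal (72/25) * σ G.set
            ≤ 1 * σ G.set + ENNReal.ofReal 3 * σ G.set := by
              rw [one_mul]; gcongr; norm_num
          _ = 4 * σ G.set := by rw [← add_mul]; norm_num

lemma uw_ne_top (𝒢 : Finset DI) (G : DI) (x : ℝ) : uw 𝒢 G x ≠ ⊤ :=
  ENNReal.pow_ne_top ENNReal.ofReal_ne_top

lemma uw_ne_zero (𝒢 : Finset DI) (G : DI) (x : ℝ) : uw 𝒢 G x ≠ 0 :=
  pow_ne_zero _ (by simp)

lemma sum_uw_inv (𝒢 : Finset DI) (x : ℝ) :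
    ∑ G ∈ 𝒢.filter (fun G => x ∈ G.set), ((uw 𝒢 G x)⁻¹)^2 ≤ 4 := by
  have hinj : Set.InjOn (fun G => Ncnt 𝒢 G x) (𝒢.filter (fun G => x ∈ G.set) : Finset DI) := by
    have key : ∀ G H : DI, x ∈ G.set → x ∈ H.set → G ∈ 𝒢 → G.k < H.k → Ncnt 𝒢 G x < Ncnt 𝒢 H x := by
      intro G H hG hH hG𝒢 hk
      apply Finset.card_lt_card
      rw [Finset.ssubset_iff_of_subset]
      · exact ⟨G, by simp [hG𝒢, hk, hG], by simp⟩
      · intro D; simp only [Finset.mem_filter]; rintro ⟨a, b, c⟩; exact ⟨a, b, c.trans hk⟩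
    intro G hG H hH h
    simp only [Finset.coe_filter, Set.mem_ofPred_eq] at hG hH h
    rcases lt_trichotomy G.k H.k with hk | hk | hk
    · exact absurd h (key G H hG.2 hH.2 hG.1 hk).ne
    · exact DI.eq_of_mem hG.2 hH.2 hk
    · exact absurd h (key H G hH.2 hG.2 hH.1 hk).ne'
  have e : ∀ n : ℕ, (((ENNReal.ofReal (6/5))^n)⁻¹)^2 = ENNReal.ofReal ((25/36)^n) := by
    intro n
    rw [← ENNReal.ofReal_pow (by norm_num), ← ENNReal.ofReal_inv_of_pos (by positivity),
      ← ENNReal.ofReal_pow (by positivity), ← inv_pow, ← pow_mul, mul_comm n, pow_mul]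
    norm_num
  calc ∑ G ∈ 𝒢.filter (fun G => x ∈ G.set), ((uw 𝒢 G x)⁻¹)^2
      = ∑ G ∈ 𝒢.filter (fun G => x ∈ G.set), ENNReal.ofReal ((25/36)^(Ncnt 𝒢 G x)) := by
        simp only [uw, e]
    _ = ∑ n ∈ (𝒢.filter (fun G => x ∈ G.set)).image (fun G => Ncnt 𝒢 G x),
          ENNReal.ofReal ((25/36)^n) := by rw [Finset.sum_image hinj]
    _ = ENNReal.ofReal (∑ n ∈ (𝒢.filter (fun G => x ∈ G.set)).image (fun G => Ncnt 𝒢 G x),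
          (25/36)^n) := by rw [ENNReal.ofReal_sum_of_nonneg]; intros; positivity
    _ ≤ ENNReal.ofReal (∑' n : ℕ, (25/36:ℝ)^n) := by
        gcongr
        exact (summable_geometric_of_lt_one (by norm_num) (by norm_num)).sum_le_tsum _
          (fun _ _ => by positivity)
    _ ≤ 4 := by
        rw [tsum_geometric_of_lt_one (by norm_num) (by norm_num)]
        rw [show (4:ℝ≥0∞) = ENNReal.ofReal 4 by norm_num]
        apply ENNReal.ofReal_le_ofReal; norm_num

lemma CS_sq {μ : Measure ℝ} {F u : ℝ → ℝ≥0∞} (hF : AEMeasurable F μ) (hu : AEMeasurable u μ) :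
    (∫⁻ x, F x * u x ∂μ)^2 ≤ (∫⁻ x, F x ^ 2 ∂μ) * ∫⁻ x, u x ^ 2 ∂μ := by
  have h := ENNReal.lintegral_mul_le_Lp_mul_Lq μ (p := 2) (q := 2)
    (Real.HolderConjugate.two_two) hF hu
  simp only [Pi.mul_apply, ENNReal.rpow_two] at h
  calc _ ≤ ((∫⁻ x, F x ^ 2 ∂μ) ^ (1/2:ℝ) * (∫⁻ x, u x ^ 2 ∂μ)^(1/2:ℝ))^2 := by gcongr
    _ = _ := by
      rw [mul_pow, ← ENNReal.rpow_two, ← ENNReal.rpow_two, ← ENNReal.rpow_mul, ← ENNReal.rpow_mul]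
      norm_num

/-- average in extended reals -/
def eavg (σ : Measure ℝ) (G : DI) (f : ℝ → ℝ) : ℝ≥0∞ := (∫⁻ x in G.set, ‖f x‖ₑ ∂σ) / σ G.set

lemma carleson {σ : Measure ℝ} [IsLocallyFiniteMeasure σ] {ℱ : Set DI} {𝒢 : Finset DI}
    (h𝒢 : ∀ G ∈ 𝒢, G ∈ ℱ)
    (hup : ∀ H ∈ ℱ, ∀ C ∈ 𝒢, C.set ⊆ H.set → H ∈ 𝒢)
    (hch : ∀ G ∈ 𝒢, ∑ C ∈ 𝒢.filter (fun C => C ∈ fChildren ℱ G), σ C.set ≤ σ G.set / 2)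
    {f : ℝ → ℝ} (hf : AEMeasurable f σ) :
    ∑ G ∈ 𝒢, (eavg σ G f)^2 * σ G.set ≤ 16 * ∫⁻ x, ‖f x‖ₑ^2 ∂σ := by
  have hfe : AEMeasurable (fun x => ‖f x‖ₑ) σ := hf.enorm
  have h1 : ∀ G ∈ 𝒢, (eavg σ G f)^2 * σ G.set ≤
      4 * ∫⁻ x, G.set.indicator (fun x => ‖f x‖ₑ^2 * ((uw 𝒢 G x)⁻¹)^2) x ∂σ := by
    intro G hG
    rw [lintegral_indicator G.measurable_set]
    set A := ∫⁻ x in G.set, ‖f x‖ₑ^2 * ((uw 𝒢 G x)⁻¹)^2 ∂σ with hA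
    have hcs : (∫⁻ x in G.set, ‖f x‖ₑ ∂σ)^2 ≤ A * (4 * σ G.set) := by
      have := CS_sq (μ := σ.restrict G.set) (F := fun x => ‖f x‖ₑ * (uw 𝒢 G x)⁻¹) (u := uw 𝒢 G)
        (hfe.restrict.mul (measurable_uw 𝒢 G).inv.aemeasurable) (measurable_uw 𝒢 G).aemeasurable
      have e : ∀ x, ‖f x‖ₑ * (uw 𝒢 G x)⁻¹ * uw 𝒢 G x = ‖f x‖ₑ := fun x => by
        rw [mul_assoc, ENNReal.inv_mul_cancel (uw_ne_zero _ _ _) (uw_ne_top _ _ _), mul_one]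
      simp only [e, mul_pow] at this
      refine this.trans ?_
      rw [← hA]
      gcongr
      exact uw_int h𝒢 hup hch _ G hG rfl
    by_cases h0 : σ G.set = 0
    · simp [h0]
    · have ht := (G.measure_lt_top σ).ne
      unfold eavg
      calc ((∫⁻ x in G.set, ‖f x‖ₑ ∂σ) / σ G.set)^2 * σ G.set
          = (∫⁻ x in G.set, ‖f x‖ₑ ∂σ)^2 * (σ G.set)⁻¹ * ((σ G.set)⁻¹ * σ G.set) := by
            rw [div_eq_mul_inv]; ring
        _ ≤ A * (4 * σ G.set) * (σ G.set)⁻¹ * ((σ G.set)⁻¹ * σ G.set) := by gcongr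
        _ = 4 * A * ((σ G.set)⁻¹ * σ G.set) * ((σ G.set)⁻¹ * σ G.set) := by ring
        _ = 4 * A := by rw [ENNReal.inv_mul_cancel h0 ht, mul_one, mul_one]
        _ ≤ 4 * A := le_rfl
  calc ∑ G ∈ 𝒢, (eavg σ G f)^2 * σ G.set
      ≤ ∑ G ∈ 𝒢, 4 * ∫⁻ x, G.set.indicator (fun x => ‖f x‖ₑ^2 * ((uw 𝒢 G x)⁻¹)^2) x ∂σ :=
        Finset.sum_le_sum h1
    _ = 4 * ∫⁻ x, ∑ G ∈ 𝒢, G.set.indicator (fun x => ‖f x‖ₑ^2 * ((uw 𝒢 G x)⁻¹)^2) x ∂σ := by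
        rw [← Finset.mul_sum, lintegral_finsetSum']
        intro G _
        exact ((hfe.pow_const 2).mul
          ((measurable_uw 𝒢 G).inv.pow_const 2).aemeasurable).indicator G.measurable_set
    _ ≤ 4 * ∫⁻ x, 4 * ‖f x‖ₑ^2 ∂σ := by
        gcongr with x
        calc ∑ G ∈ 𝒢, G.set.indicator (fun x => ‖f x‖ₑ^2 * ((uw 𝒢 G x)⁻¹)^2) x
            = ‖f x‖ₑ^2 * ∑ G ∈ 𝒢.filter (fun G => x ∈ G.set), ((uw 𝒢 G x)⁻¹)^2 := by
              rw [Finset.mul_sum, Finset.sum_filter]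
              refine Finset.sum_congr rfl fun G _ => ?_
              simp only [Set.indicator_apply]
          _ ≤ ‖f x‖ₑ^2 * 4 := by gcongr; exact sum_uw_inv 𝒢 x
          _ = _ := mul_comm _ _
    _ = 16 * ∫⁻ x, ‖f x‖ₑ^2 ∂σ := by
        rw [lintegral_const_mul'' _ (hfe.pow_const 2), ← mul_assoc]; norm_num

lemma packing {σ : Measure ℝ} [IsLocallyFiniteMeasure σ] {ℱ : Set DI} {𝒢 : Finset DI}
    (h𝒢 : ∀ G ∈ 𝒢, G ∈ ℱ)
    (hup : ∀ H ∈ ℱ, ∀ C ∈ 𝒢, C.set ⊆ H.set → H ∈ 𝒢)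
    (hch : ∀ G ∈ 𝒢, ∑ C ∈ 𝒢.filter (fun C => C ∈ fChildren ℱ G), σ C.set ≤ σ G.set / 2)
    {G : DI} (hG : G ∈ 𝒢) :
    ∑ F ∈ 𝒢.filter (fun F => F.set ⊆ G.set), σ F.set ≤ 12 * σ G.set := by
  calc ∑ F ∈ 𝒢.filter (fun F => F.set ⊆ G.set), σ F.set
      = ∑ F ∈ 𝒢.filter (fun F => F.set ⊆ G.set),
          ∫⁻ x in G.set, F.set.indicator (fun _ => 1) x ∂σ := by
        refine Finset.sum_congr rfl fun F hF => ?_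
        rw [lintegral_indicator F.measurable_set, Measure.restrict_restrict F.measurable_set,
          Set.inter_eq_left.2 (Finset.mem_filter.1 hF).2]
        simp
    _ = ∫⁻ x in G.set, ∑ F ∈ 𝒢.filter (fun F => F.set ⊆ G.set),
          F.set.indicator (fun _ => 1) x ∂σ := by
        rw [lintegral_finsetSum]
        intro F _
        exact measurable_const.indicator F.measurable_set
    _ ≤ ∫⁻ x in G.set, 3 * (uw 𝒢 G x)^2 ∂σ := by
        refine setLIntegral_mono' G.measurable_set fun x hx => ?_
        have h1 : ∑ F ∈ 𝒢.filter (fun F => F.set ⊆ G.set), F.set.indicator (fun _ => (1:ℝ≥0∞)) x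
            = ((𝒢.filter (fun F => F.set ⊆ G.set ∧ x ∈ F.set)).card : ℝ≥0∞) := by
          simp only [Set.indicator_apply]
          rw [← Finset.sum_filter, Finset.filter_filter]; simp
        have h2 : (𝒢.filter (fun F => F.set ⊆ G.set ∧ x ∈ F.set)).card ≤ Ncnt 𝒢 G x + 1 := by
          refine le_trans (Finset.card_le_card (t := insert G
            (𝒢.filter fun G' => x ∈ G'.set ∧ G'.k < G.k)) ?_) (Finset.card_insert_le _ _)
          intro F hF
          simp only [Finset.mem_filter, Finset.mem_insert] at hF ⊢
          rcases (DI.k_le hF.2.1).lt_or_eq with h | h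
          · exact Or.inr ⟨hF.1, hF.2.2, h⟩
          · exact Or.inl (DI.eq_of_mem hF.2.2 hx h)
        have h3 : ∀ n : ℕ, ((n:ℝ≥0∞) + 1) ≤ 3 * ((ENNReal.ofReal (6/5))^n)^2 := by
          intro n
          have hb := one_add_mul_le_pow (a := (11/25:ℝ)) (by norm_num) n
          have e : 3 * ((ENNReal.ofReal (6/5))^n)^2 = ENNReal.ofReal (3 * (1 + 11/25)^n) := by
            rw [ENNReal.ofReal_mul (by norm_num), ENNReal.ofReal_pow (by norm_num), ← pow_mul,
              mul_comm n, pow_mul, ← ENNReal.ofReal_pow (by norm_num)]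
            norm_num
          rw [e, show (n:ℝ≥0∞) + 1 = ENNReal.ofReal (n+1) by
            rw [ENNReal.ofReal_add (by positivity) (by norm_num)]; simp]
          apply ENNReal.ofReal_le_ofReal
          have : (0:ℝ) ≤ n := by positivity
          linarith
        rw [h1]
        calc _ ≤ ((Ncnt 𝒢 G x + 1 : ℕ) : ℝ≥0∞) := by exact_mod_cast h2
          _ ≤ _ := by push_cast; exact h3 _
    _ = 3 * ∫⁻ x in G.set, (uw 𝒢 G x)^2 ∂σ :=
        lintegral_const_mul _ ((measurable_uw 𝒢 G).pow_const 2)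
    _ ≤ 3 * (4 * σ G.set) := by gcongr; exact uw_int h𝒢 hup hch _ G hG rfl
    _ = 12 * σ G.set := by rw [← mul_assoc]; norm_num

lemma avg_eq {σ : Measure ℝ} (G : DI) {f : ℝ → ℝ} (hf : AEStronglyMeasurable f σ) :
    avg σ G.set (fun x => |f x|) = (eavg σ G f).toReal := by
  unfold avg eavg
  rw [ENNReal.toReal_div, ← integral_norm_eq_lintegral_enorm hf.restrict]
  rfl

lemma alphaF_nonneg {σ : Measure ℝ} (ℱ : Set DI) (f : ℝ → ℝ) (F : DI) : 0 ≤ alphaF σ ℱ f F := by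
  apply Real.iSup_nonneg
  intro G
  exact div_nonneg (integral_nonneg fun _ => abs_nonneg _) ENNReal.toReal_nonneg

lemma eavg_lt_top {σ : Measure ℝ} [IsLocallyFiniteMeasure σ] (G : DI) {f : ℝ → ℝ}
    (hf : MemLp f 2 σ) : eavg σ G f < ⊤ := by
  unfold eavg
  by_cases h0 : σ G.set = 0
  · simp [Measure.restrict_eq_zero.2 h0, h0]
  · refine ENNReal.div_lt_top ?_ h0
    have : IsFiniteMeasure (σ.restrict G.set) := ⟨by simpa using G.measure_lt_top σ⟩
    exact ((hf.restrict G.set).integrable (by norm_num)).2.ne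

lemma alpha_sum {σ : Measure ℝ} [IsLocallyFiniteMeasure σ] {ℱ : Set DI} {𝒢 : Finset DI}
    (h𝒢 : ∀ G ∈ 𝒢, G ∈ ℱ)
    (hup : ∀ H ∈ ℱ, ∀ C ∈ 𝒢, C.set ⊆ H.set → H ∈ 𝒢)
    (hch : ∀ G ∈ 𝒢, ∑ C ∈ 𝒢.filter (fun C => C ∈ fChildren ℱ G), σ C.set ≤ σ G.set / 2)
    {f : ℝ → ℝ} (hf : MemLp f 2 σ) :
    ∑ F ∈ 𝒢, ENNReal.ofReal (alphaF σ ℱ f F)^2 * σ F.set ≤ 192 * ∫⁻ x, ‖f x‖ₑ^2 ∂σ := by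
  have h1 : ∀ F ∈ 𝒢, ENNReal.ofReal (alphaF σ ℱ f F)^2 ≤
      ∑ G ∈ 𝒢.filter (fun G => F.set ⊆ G.set), (eavg σ G f)^2 := by
    intro F hF
    have hne : Nonempty {G : DI // G ∈ ℱ ∧ F.set ⊆ G.set} := ⟨⟨F, h𝒢 F hF, subset_rfl⟩⟩
    set S := ∑ G ∈ 𝒢.filter (fun G => F.set ⊆ G.set), (eavg σ G f)^2 with hS
    have hSt : S ≠ ⊤ := by
      rw [hS]; exact (ENNReal.sum_lt_top.2 fun G _ => ENNReal.pow_lt_top (eavg_lt_top G hf)).ne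
    have h2 : alphaF σ ℱ f F ≤ Real.sqrt S.toReal := by
      refine ciSup_le fun G => ?_
      rw [avg_eq _ hf.1]
      apply Real.le_sqrt_of_sq_le
      rw [← ENNReal.toReal_pow]
      apply ENNReal.toReal_mono hSt
      exact Finset.single_le_sum (f := fun G => (eavg σ G f)^2) (fun _ _ => zero_le)
        (Finset.mem_filter.2 ⟨hup _ G.2.1 F hF G.2.2, G.2.2⟩)
    rw [← ENNReal.ofReal_pow (alphaF_nonneg _ _ _)]
    apply ENNReal.ofReal_le_of_le_toReal
    calc _ ≤ Real.sqrt S.toReal ^ 2 := by gcongr; exact alphaF_nonneg _ _ _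
      _ = _ := Real.sq_sqrt ENNReal.toReal_nonneg
  calc ∑ F ∈ 𝒢, ENNReal.ofReal (alphaF σ ℱ f F)^2 * σ F.set
      ≤ ∑ F ∈ 𝒢, ∑ G ∈ 𝒢, if F.set ⊆ G.set then (eavg σ G f)^2 * σ F.set else 0 := by
        refine Finset.sum_le_sum fun F hF => ?_
        refine (mul_le_mul_left (h1 F hF) _).trans_eq ?_
        rw [Finset.sum_mul, Finset.sum_filter]
    _ = ∑ G ∈ 𝒢, (eavg σ G f)^2 * ∑ F ∈ 𝒢.filter (fun F => F.set ⊆ G.set), σ F.set := by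
        rw [Finset.sum_comm]
        refine Finset.sum_congr rfl fun G _ => ?_
        rw [Finset.mul_sum, Finset.sum_filter]
    _ ≤ ∑ G ∈ 𝒢, (eavg σ G f)^2 * (12 * σ G.set) := by
        refine Finset.sum_le_sum fun G hG => ?_
        gcongr
        exact packing h𝒢 hup hch hG
    _ = 12 * ∑ G ∈ 𝒢, (eavg σ G f)^2 * σ G.set := by
        rw [Finset.mul_sum]; refine Finset.sum_congr rfl fun G _ => by ring
    _ ≤ 12 * (16 * ∫⁻ x, ‖f x‖ₑ^2 ∂σ) := by gcongr; exact carleson h𝒢 hup hch hf.1.aemeasurable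
    _ = _ := by rw [← mul_assoc]; norm_num

lemma haar_form (ω : Measure ℝ) (J : DI) (g : ℝ → ℝ) : haar ω J g = fun x =>
    J.left.set.indicator (fun _ => avg ω J.left.set g - avg ω J.set g) x
    + J.right.set.indicator (fun _ => avg ω J.right.set g - avg ω J.set g) x := by
  funext x
  obtain ⟨hU, hD⟩ := J.children
  simp only [haar]
  rw [← hU]
  by_cases h1 : x ∈ J.left.set
  · have h2 : x ∉ J.right.set := Set.disjoint_left.1 hD h1
    simp [h1, h2]
  · by_cases h2 : x ∈ J.right.set <;> simp [h1, h2]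

lemma haar_memLp (ω : Measure ℝ) [IsLocallyFiniteMeasure ω] (J : DI) (g : ℝ → ℝ) :
    MemLp (haar ω J g) 2 ω := by
  rw [haar_form]
  have h1 := memLp_indicator_const (μ := ω) 2 J.left.measurable_set
    (avg ω J.left.set g - avg ω J.set g) (Or.inr (J.left.measure_lt_top ω).ne)
  have h2 := memLp_indicator_const (μ := ω) 2 J.right.measurable_set
    (avg ω J.right.set g - avg ω J.set g) (Or.inr (J.right.measure_lt_top ω).ne)
  exact h1.add h2

lemma left_sub (J : DI) : J.left.set ⊆ J.set := by rw [← J.children.1]; exact subset_union_left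
lemma right_sub (J : DI) : J.right.set ⊆ J.set := by rw [← J.children.1]; exact subset_union_right

lemma haar_zero (ω : Measure ℝ) (J : DI) (g : ℝ → ℝ) {x : ℝ} (hx : x ∉ J.set) :
    haar ω J g x = 0 := by
  have h1 : x ∉ J.left.set := fun h => hx (left_sub J h)
  have h2 : x ∉ J.right.set := fun h => hx (right_sub J h)
  simp [haar_form, h1, h2]

lemma intOn {ω : Measure ℝ} [IsLocallyFiniteMeasure ω] {g : ℝ → ℝ} (hg : MemLp g 2 ω) (J : DI) :
    IntegrableOn g J.set ω := by
  have : IsFiniteMeasure (ω.restrict J.set) := ⟨by simpa using J.measure_lt_top ω⟩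
  exact (hg.restrict J.set).integrable (by norm_num)

lemma avg_mul {ω : Measure ℝ} [IsLocallyFiniteMeasure ω] (g : ℝ → ℝ) (J : DI) (h : 0 < ω J.set) :
    avg ω J.set g * (ω J.set).toReal = ∫ x in J.set, g x ∂ω :=
  div_mul_cancel₀ _ (ENNReal.toReal_pos h.ne' (J.measure_lt_top ω).ne).ne'

lemma haar_data {ω : Measure ℝ} [IsLocallyFiniteMeasure ω] {g : ℝ → ℝ} (hg : MemLp g 2 ω) (J : DI)
    (hl : 0 < ω J.left.set) :
    (∫ x in J.set, g x ∂ω = (∫ x in J.left.set, g x ∂ω) + ∫ x in J.right.set, g x ∂ω) ∧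
    avg ω J.set g * ((ω J.left.set).toReal + (ω J.right.set).toReal) = ∫ x in J.set, g x ∂ω := by
  obtain ⟨hU, hD⟩ := J.children
  constructor
  · rw [← hU, setIntegral_union hD J.right.measurable_set (intOn hg _) (intOn hg _)]
  · rw [← avg_mul g J (hl.trans_le (measure_mono (left_sub J))),
      ← ENNReal.toReal_add (J.left.measure_lt_top ω).ne (J.right.measure_lt_top ω).ne,
      ← measure_union hD J.right.measurable_set, hU]

lemma haar_int {ω : Measure ℝ} [IsLocallyFiniteMeasure ω] {g : ℝ → ℝ} (hg : MemLp g 2 ω) (J : DI)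
    (hl : 0 < ω J.left.set) (hr : 0 < ω J.right.set) : ∫ x, haar ω J g x ∂ω = 0 := by
  obtain ⟨h1, h2⟩ := haar_data hg J hl
  have hL := avg_mul g J.left hl
  have hR := avg_mul g J.right hr
  rw [haar_form, integral_add, integral_indicator_const _ J.left.measurable_set,
    integral_indicator_const _ J.right.measurable_set]
  · simp only [smul_eq_mul, Measure.real]; linarith
  · exact (integrable_indicator_iff J.left.measurable_set).2
      (integrableOn_const (J.left.measure_lt_top ω).ne)
  · exact (integrable_indicator_iff J.right.measurable_set).2
      (integrableOn_const (J.right.measure_lt_top ω).ne)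

lemma haar_mul_int {ω : Measure ℝ} [IsLocallyFiniteMeasure ω] {g h : ℝ → ℝ}
    (hh : MemLp h 2 ω) (J : DI) :
    ∫ x, haar ω J g x * h x ∂ω =
      (avg ω J.left.set g - avg ω J.set g) * (∫ x in J.left.set, h x ∂ω)
      + (avg ω J.right.set g - avg ω J.set g) * (∫ x in J.right.set, h x ∂ω) := by
  have e : (fun x => haar ω J g x * h x) = fun x =>
      J.left.set.indicator (fun x => (avg ω J.left.set g - avg ω J.set g) * h x) x
      + J.right.set.indicator (fun x => (avg ω J.right.set g - avg ω J.set g) * h x) x := by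
    funext x
    rw [haar_form]
    simp only [Set.indicator_apply]
    split_ifs <;> ring
  rw [e, integral_add, integral_indicator J.left.measurable_set,
    integral_indicator J.right.measurable_set, integral_const_mul, integral_const_mul]
  · exact (integrable_indicator_iff J.left.measurable_set).2 ((intOn hh _).const_mul _)
  · exact (integrable_indicator_iff J.right.measurable_set).2 ((intOn hh _).const_mul _)

lemma haar_proj {ω : Measure ℝ} [IsLocallyFiniteMeasure ω] {g : ℝ → ℝ} (hg : MemLp g 2 ω) (J : DI)
    (hl : 0 < ω J.left.set) (hr : 0 < ω J.right.set) :
    ∫ x, haar ω J g x * g x ∂ω = ∫ x, haar ω J g x * haar ω J g x ∂ω := by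
  obtain ⟨h1, h2⟩ := haar_data hg J hl
  have hL := avg_mul g J.left hl
  have hR := avg_mul g J.right hr
  obtain ⟨hU, hD⟩ := J.children
  have eL : ∫ x in J.left.set, haar ω J g x ∂ω
      = (avg ω J.left.set g - avg ω J.set g) * (ω J.left.set).toReal := by
    rw [setIntegral_congr_fun (g := fun _ => avg ω J.left.set g - avg ω J.set g)
      J.left.measurable_set]
    · simp [Measure.real, mul_comm]
    · intro x hx
      have h2 : x ∉ J.right.set := Set.disjoint_left.1 hD hx
      simp [haar_form, hx, h2]
  have eR : ∫ x in J.right.set, haar ω J g x ∂ω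
      = (avg ω J.right.set g - avg ω J.set g) * (ω J.right.set).toReal := by
    rw [setIntegral_congr_fun (g := fun _ => avg ω J.right.set g - avg ω J.set g)
      J.right.measurable_set]
    · simp [Measure.real, mul_comm]
    · intro x hx
      have h2 : x ∉ J.left.set := Set.disjoint_right.1 hD hx
      simp [haar_form, hx, h2]
  rw [haar_mul_int hg, haar_mul_int (haar_memLp ω J g), eL, eR, ← hL, ← hR]
  rw [← hL, ← hR] at h1
  rw [h1] at h2
  linear_combination (-avg ω J.set g) * h2

lemma haar_orth_lt {ω : Measure ℝ} [IsLocallyFiniteMeasure ω] {g : ℝ → ℝ} (hg : MemLp g 2 ω)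
    (J K : DI) (hl : 0 < ω J.left.set) (hr : 0 < ω J.right.set) (hk : J.k < K.k) :
    ∫ x, haar ω J g x * haar ω K g x ∂ω = 0 := by
  by_cases hD : Disjoint J.set K.set
  · rw [integral_eq_zero_of_ae]
    filter_upwards with x
    by_cases hx : x ∈ J.set
    · simp [haar_zero ω K g (Set.disjoint_left.1 hD hx)]
    · simp [haar_zero ω J g hx]
  · obtain ⟨x, hxJ, hxK⟩ := Set.not_disjoint_iff.1 hD
    have : ∃ c, ∀ y ∈ J.set, haar ω K g y = c := by
      rw [← K.children.1] at hxK
      obtain ⟨hU, hDK⟩ := K.children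
      rcases hxK with h | h
      · have hs : J.set ⊆ K.left.set := DI.subset_of_mem hxJ h (by simp [DI.left]; omega)
        refine ⟨avg ω K.left.set g - avg ω K.set g, fun y hy => ?_⟩
        have := Set.disjoint_left.1 hDK (hs hy)
        simp [haar_form, hs hy, this]
      · have hs : J.set ⊆ K.right.set := DI.subset_of_mem hxJ h (by simp [DI.right]; omega)
        refine ⟨avg ω K.right.set g - avg ω K.set g, fun y hy => ?_⟩
        have := Set.disjoint_right.1 hDK (hs hy)
        simp [haar_form, hs hy, this]
    obtain ⟨c, hc⟩ := this
    have e : (fun x => haar ω J g x * haar ω K g x) = fun x => haar ω J g x * c := by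
      funext y
      by_cases hy : y ∈ J.set
      · rw [hc y hy]
      · simp [haar_zero ω J g hy]
    rw [e, integral_mul_const, haar_int hg J hl hr, zero_mul]

lemma haar_orth {ω : Measure ℝ} [IsLocallyFiniteMeasure ω] {g : ℝ → ℝ} (hg : MemLp g 2 ω)
    (J K : DI) (hl : 0 < ω J.left.set) (hr : 0 < ω J.right.set)
    (hl' : 0 < ω K.left.set) (hr' : 0 < ω K.right.set) (hne : J ≠ K) :
    ∫ x, haar ω J g x * haar ω K g x ∂ω = 0 := by
  rcases lt_trichotomy J.k K.k with hk | hk | hk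
  · exact haar_orth_lt hg J K hl hr hk
  · rw [integral_eq_zero_of_ae]
    filter_upwards with x
    by_cases hx : x ∈ J.set
    · have : x ∉ K.set := fun h => hne (DI.eq_of_mem hx h hk)
      simp [haar_zero ω K g this]
    · simp [haar_zero ω J g hx]
  · rw [← haar_orth_lt hg K J hl' hr' hk]
    exact integral_congr_ae (Filter.Eventually.of_forall fun x => mul_comm _ _)

lemma hilb_bessel {E ι : Type*} [NormedAddCommGroup E] [InnerProductSpace ℝ E] (S : Finset ι)
    (v : ι → E) (g : E) (ho : ∀ i ∈ S, ∀ j ∈ S, i ≠ j → inner ℝ (v i) (v j) = 0)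
    (hp : ∀ i ∈ S, inner ℝ (v i) g = ‖v i‖^2) : ∑ i ∈ S, ‖v i‖^2 ≤ ‖g‖^2 := by
  have h1 : ‖∑ i ∈ S, v i‖^2 = ∑ i ∈ S, ‖v i‖^2 := by
    rw [← real_inner_self_eq_norm_sq, sum_inner]
    refine Finset.sum_congr rfl fun i hi => ?_
    rw [inner_sum, Finset.sum_eq_single_of_mem i hi fun j hj hji => ho i hi j hj hji.symm,
      real_inner_self_eq_norm_sq]
  have h2 : inner ℝ (∑ i ∈ S, v i) g = ∑ i ∈ S, ‖v i‖^2 := by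
    rw [sum_inner]; exact Finset.sum_congr rfl hp
  have h3 := norm_sub_sq_real (∑ i ∈ S, v i) g
  rw [h1, h2] at h3
  nlinarith [sq_nonneg ‖∑ i ∈ S, v i - g‖]

lemma hilb_comb {E ι : Type*} [NormedAddCommGroup E] [InnerProductSpace ℝ E] (S : Finset ι)
    (v : ι → E) (ho : ∀ i ∈ S, ∀ j ∈ S, i ≠ j → inner ℝ (v i) (v j) = 0) (c : ι → ℝ) (a : ℝ)
    (hc : ∀ i ∈ S, |c i| ≤ a) : ‖∑ i ∈ S, c i • v i‖^2 ≤ a^2 * ∑ i ∈ S, ‖v i‖^2 := by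
  rw [← real_inner_self_eq_norm_sq, sum_inner, Finset.mul_sum]
  refine Finset.sum_le_sum fun i hi => ?_
  rw [inner_sum, Finset.sum_eq_single_of_mem i hi, real_inner_self_eq_norm_sq, norm_smul, mul_pow]
  · gcongr; exact hc i hi
  · intro j hj hji
    rw [inner_smul_left, inner_smul_right, ho i hi j hj hji.symm]; simp

lemma inner_toLp {ω : Measure ℝ} {u v : ℝ → ℝ} (hu : MemLp u 2 ω) (hv : MemLp v 2 ω) :
    inner ℝ (hu.toLp u) (hv.toLp v) = ∫ x, u x * v x ∂ω := by
  rw [L2.inner_def]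
  refine integral_congr_ae ?_
  filter_upwards [hu.coeFn_toLp, hv.coeFn_toLp] with x h1 h2
  rw [h1, h2]; simp [mul_comm]

lemma Htr_meas (σ ω : Measure ℝ) [IsLocallyFiniteMeasure σ] {f : ℝ → ℝ} (hf : Measurable f) (t : ℝ) :
    AEStronglyMeasurable (Htr σ f t) ω := by
  have e : Htr σ f t = fun x => ∫ y, (fun p : ℝ × ℝ =>
      {p : ℝ × ℝ | t < |p.2 - p.1|}.indicator (fun p => f p.2 / (p.2 - p.1)) p) (x, y) ∂σ := by
    funext x
    unfold Htr
    rw [← integral_indicator (measurableSet_lt measurable_const (by fun_prop))]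
    rfl
  rw [e]
  apply StronglyMeasurable.aestronglyMeasurable
  apply StronglyMeasurable.integral_prod_right'
  apply Measurable.stronglyMeasurable
  exact ((hf.comp measurable_snd).div (by fun_prop)).indicator
    (measurableSet_lt measurable_const (by fun_prop))

lemma test_bound {σ ω : Measure ℝ} [IsLocallyFiniteMeasure σ] (hT : testH σ ω ≠ ⊤) (F : DI) {t : ℝ}
    (ht : 0 < t) : eLpNorm (Htr σ (F.set.indicator 1) t) 2 ω ≤
      testH σ ω * (σ F.set)^(1/2:ℝ) := by
  have h : eLpNorm (Htr σ (F.set.indicator 1) t) 2 ω / (σ F.set)^(1/2:ℝ) ≤ testH σ ω := by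
    unfold testH DI.set
    exact le_iSup_of_le _ (le_iSup_of_le _ (le_iSup_of_le F.lo_lt (le_iSup_of_le t
      (le_iSup_of_le ht le_rfl))))
  by_cases h0 : (σ F.set)^(1/2:ℝ) = 0
  · rw [h0] at h ⊢
    have : eLpNorm (Htr σ (F.set.indicator 1) t) 2 ω = 0 := by
      by_contra hne
      rw [ENNReal.div_zero hne] at h
      exact hT (top_le_iff.1 h)
    rw [this]; exact zero_le
  · rwa [ENNReal.div_le_iff h0 (ENNReal.rpow_ne_top_of_nonneg (by norm_num)
      (F.measure_lt_top σ).ne)] at h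

set_option maxHeartbeats 1000000 in
lemma fin_sum_bound {σ ω : Measure ℝ} [IsLocallyFiniteMeasure σ] [IsLocallyFiniteMeasure ω]
    {T : DI} {ℱ : Set DI} (hTℱ : ∀ F ∈ ℱ, DI.set F ⊆ T.set)
    (hch : ∀ F ∈ ℱ, ∑' G : fChildren ℱ F, σ (G : DI).set ≤ σ (DI.set F) / 2)
    {f : ℝ → ℝ} (hf : MemLp f 2 σ) {Λ : DI → Finset DI}
    (hΛ : ∀ F ∈ ℱ, ∀ J ∈ Λ F, J ∈ corona ℱ F ∧
          0 < ω (DI.set (DI.left J)) ∧ 0 < ω (DI.set (DI.right J)))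
    {lam : DI → DI → ℝ} (hlam : ∀ F ∈ ℱ, ∀ J ∈ Λ F, |lam F J| ≤ alphaF σ ℱ f F)
    {g : ℝ → ℝ} (hg : MemLp g 2 ω) {t : ℝ} (ht : 0 < t) (hT : testH σ ω ≠ ⊤)
    (s : Finset DI) (hs : ∀ F ∈ s, F ∈ ℱ) :
    |∑ F ∈ s, pairH σ ω (F.set.indicator 1) (fun x => ∑ J ∈ Λ F, lam F J * haar ω J g x) t| ≤
      14 * (testH σ ω).toReal * (eLpNorm f 2 σ).toReal * (eLpNorm g 2 ω).toReal := by
  -- the finite upward closed family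
  have hfin : {H : DI | H ∈ ℱ ∧ ∃ F ∈ s, F.set ⊆ H.set}.Finite := by
    have : {H : DI | H ∈ ℱ ∧ ∃ F ∈ s, F.set ⊆ H.set} ⊆
        ⋃ F ∈ s, {H : DI | H ∈ ℱ ∧ F.set ⊆ H.set} := by
      rintro H ⟨h1, F, h2, h3⟩
      simp only [Set.mem_iUnion]
      exact ⟨F, h2, h1, h3⟩
    refine Set.Finite.subset (Set.Finite.biUnion s.finite_toSet fun F _ => ?_) this
    refine Set.Finite.of_finite_image (f := fun H : DI => H.k) ?_ ?_
    · refine (Set.finite_Icc F.k T.k).subset ?_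
      rintro _ ⟨H, ⟨h1, h2⟩, rfl⟩
      exact ⟨DI.k_le h2, DI.k_le (hTℱ H h1)⟩
    · rintro H ⟨h1, h2⟩ H' ⟨h1', h2'⟩ h
      exact DI.eq_of_mem (h2 F.lo_mem) (h2' F.lo_mem) h
  have hm : ∀ H, H ∈ hfin.toFinset ↔ H ∈ ℱ ∧ ∃ F ∈ s, F.set ⊆ H.set := fun H => by
    rw [Set.Finite.mem_toFinset]; rfl
  generalize hfin.toFinset = 𝒢 at hm
  have h𝒢 : ∀ G ∈ 𝒢, G ∈ ℱ := fun G hG => ((hm G).1 hG).1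
  have hs𝒢 : s ⊆ 𝒢 := fun F hF => (hm F).2 ⟨hs F hF, F, hF, subset_rfl⟩
  have hup : ∀ H ∈ ℱ, ∀ C ∈ 𝒢, C.set ⊆ H.set → H ∈ 𝒢 := by
    intro H hH C hC hCH
    obtain ⟨_, F, hF, hFC⟩ := (hm C).1 hC
    exact (hm H).2 ⟨hH, F, hF, hFC.trans hCH⟩
  have hch' : ∀ G ∈ 𝒢, ∑ C ∈ 𝒢.filter (fun C => C ∈ fChildren ℱ G), σ C.set ≤ σ G.set / 2 := by
    intro G hG
    refine le_trans ?_ (hch G (h𝒢 G hG))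
    rw [tsum_subtype (fChildren ℱ G) (fun C => σ C.set), Finset.sum_filter]
    exact ENNReal.sum_le_tsum (f := (fChildren ℱ G).indicator (fun C => σ C.set)) 𝒢
  have hα := alpha_sum h𝒢 hup hch' hf
  -- real version
  have hfe : ∫⁻ x, ‖f x‖ₑ^2 ∂σ = (eLpNorm f 2 σ)^2 := by
    rw [eLpNorm_eq_lintegral_rpow_enorm_toReal (by norm_num) (by norm_num), ← ENNReal.rpow_two,
      ← ENNReal.rpow_mul]
    norm_num
  have hαr : ∑ F ∈ s, (alphaF σ ℱ f F)^2 * (σ F.set).toReal ≤ 192 * (eLpNorm f 2 σ).toReal^2 := by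
    have h1 : ∑ F ∈ s, ENNReal.ofReal (alphaF σ ℱ f F)^2 * σ F.set ≤ 192 * (eLpNorm f 2 σ)^2 := by
      rw [← hfe]; exact (Finset.sum_le_sum_of_subset hs𝒢).trans hα
    have h2 := ENNReal.toReal_mono
      (ENNReal.mul_ne_top (by norm_num) (ENNReal.pow_ne_top hf.2.ne)) h1
    rw [ENNReal.toReal_sum] at h2
    · simpa [ENNReal.toReal_ofReal (alphaF_nonneg _ _ _)] using h2
    · intro F _
      exact ENNReal.mul_ne_top (ENNReal.pow_ne_top ENNReal.ofReal_ne_top) (F.measure_lt_top σ).ne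
  let v : DI → Lp ℝ 2 ω := fun J => (haar_memLp ω J g).toLp _
  have hv : ∀ J K, inner ℝ (v J) (v K) = ∫ x, haar ω J g x * haar ω K g x ∂ω :=
    fun J K => inner_toLp _ _
  have hB : ∑ F ∈ s, ∑ J ∈ Λ F, ‖v J‖^2 ≤ (eLpNorm g 2 ω).toReal^2 := by
    rw [Finset.sum_sigma', ← Lp.norm_toLp g hg]
    refine hilb_bessel (s.sigma Λ) (fun i => v i.2) (hg.toLp g) ?_ ?_
    · rintro ⟨F, J⟩ h1 ⟨F', J'⟩ h2 hne
      rw [Finset.mem_sigma] at h1 h2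
      simp only at h1 h2 ⊢
      obtain ⟨a1, a2, a3⟩ := hΛ F (hs F h1.1) J h1.2
      obtain ⟨b1, b2, b3⟩ := hΛ F' (hs F' h2.1) J' h2.2
      rw [hv]
      refine haar_orth hg J J' a2 a3 b2 b3 ?_
      rintro rfl
      rcases lt_trichotomy F.k F'.k with hk | hk | hk
      · exact b1.2 F (hs F h1.1) (DI.ssubset_of_mem (a1.1 J.lo_mem) (b1.1 J.lo_mem) hk) a1.1
      · exact hne (by rw [DI.eq_of_mem (a1.1 J.lo_mem) (b1.1 J.lo_mem) hk])
      · exact a1.2 F' (hs F' h2.1) (DI.ssubset_of_mem (b1.1 J.lo_mem) (a1.1 J.lo_mem) hk) b1.1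
    · rintro ⟨F, J⟩ h1
      rw [Finset.mem_sigma] at h1
      obtain ⟨a1, a2, a3⟩ := hΛ F (hs F h1.1) J h1.2
      rw [← real_inner_self_eq_norm_sq, hv, ← haar_proj hg J a2 a3]
      exact inner_toLp _ _
  have hpair : ∀ F ∈ s, |pairH σ ω (F.set.indicator 1)
      (fun x => ∑ J ∈ Λ F, lam F J * haar ω J g x) t| ≤ (testH σ ω).toReal *
        ((alphaF σ ℱ f F * Real.sqrt (σ F.set).toReal) * Real.sqrt (∑ J ∈ Λ F, ‖v J‖^2)) := by
    intro F hF
    have hb := test_bound (σ := σ) (ω := ω) hT F ht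
    have hbt : testH σ ω * (σ F.set)^(1/2:ℝ) ≠ ⊤ := ENNReal.mul_ne_top hT
      (ENNReal.rpow_ne_top_of_nonneg (by norm_num) (F.measure_lt_top σ).ne)
    have hH : MemLp (Htr σ (F.set.indicator 1) t) 2 ω :=
      ⟨Htr_meas σ ω (measurable_one.indicator F.measurable_set) t, hb.trans_lt hbt.lt_top⟩
    have hHn : ‖hH.toLp _‖ ≤ (testH σ ω).toReal * Real.sqrt (σ F.set).toReal := by
      rw [Lp.norm_toLp]
      have := ENNReal.toReal_mono hbt hb
      rwa [ENNReal.toReal_mul, ← ENNReal.toReal_rpow, ← Real.sqrt_eq_rpow] at this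
    have hψ : pairH σ ω (F.set.indicator 1) (fun x => ∑ J ∈ Λ F, lam F J * haar ω J g x) t
        = inner ℝ (hH.toLp _) (∑ J ∈ Λ F, lam F J • v J) := by
      rw [inner_sum]
      simp_rw [inner_smul_right]
      have : ∀ J, inner ℝ (hH.toLp _) (v J) = ∫ x, Htr σ (F.set.indicator 1) t x * haar ω J g x ∂ω :=
        fun J => inner_toLp _ _
      simp_rw [this, ← integral_const_mul]
      unfold pairH
      rw [← integral_finsetSum]
      · refine integral_congr_ae (Filter.Eventually.of_forall fun x => ?_)
        simp only
        rw [Finset.mul_sum]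
        exact Finset.sum_congr rfl fun J _ => by ring
      · intro J _
        exact (hH.integrable_mul (haar_memLp ω J g)).const_mul _
    have hψn : ‖∑ J ∈ Λ F, lam F J • v J‖ ≤ alphaF σ ℱ f F * Real.sqrt (∑ J ∈ Λ F, ‖v J‖^2) := by
      have := hilb_comb (Λ F) v (fun J hJ K hK hne => by
        obtain ⟨a1, a2, a3⟩ := hΛ F (hs F hF) J hJ
        obtain ⟨b1, b2, b3⟩ := hΛ F (hs F hF) K hK
        rw [hv]; exact haar_orth hg J K a2 a3 b2 b3 hne) (lam F) (alphaF σ ℱ f F)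
        (hlam F (hs F hF))
      have h2 := Real.le_sqrt_of_sq_le this
      rwa [Real.sqrt_mul (sq_nonneg _), Real.sqrt_sq (alphaF_nonneg _ _ _)] at h2
    rw [hψ]
    calc _ ≤ ‖hH.toLp _‖ * ‖∑ J ∈ Λ F, lam F J • v J‖ := abs_real_inner_le_norm _ _
      _ ≤ ((testH σ ω).toReal * Real.sqrt (σ F.set).toReal) *
          (alphaF σ ℱ f F * Real.sqrt (∑ J ∈ Λ F, ‖v J‖^2)) := by gcongr
      _ = _ := by ring
  calc _ ≤ ∑ F ∈ s, |pairH σ ω (F.set.indicator 1)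
          (fun x => ∑ J ∈ Λ F, lam F J * haar ω J g x) t| := Finset.abs_sum_le_sum_abs _ _
    _ ≤ ∑ F ∈ s, (testH σ ω).toReal *
        ((alphaF σ ℱ f F * Real.sqrt (σ F.set).toReal) * Real.sqrt (∑ J ∈ Λ F, ‖v J‖^2)) :=
        Finset.sum_le_sum hpair
    _ = (testH σ ω).toReal * ∑ F ∈ s,
        ((alphaF σ ℱ f F * Real.sqrt (σ F.set).toReal) * Real.sqrt (∑ J ∈ Λ F, ‖v J‖^2)) := by rw [Finset.mul_sum]
    _ ≤ (testH σ ω).toReal * (Real.sqrt (∑ F ∈ s, (alphaF σ ℱ f F * Real.sqrt (σ F.set).toReal)^2) *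
          Real.sqrt (∑ F ∈ s, (Real.sqrt (∑ J ∈ Λ F, ‖v J‖^2))^2)) := by
        gcongr; exact Real.sum_mul_le_sqrt_mul_sqrt _ _ _
    _ ≤ (testH σ ω).toReal * ((14 * (eLpNorm f 2 σ).toReal) * (eLpNorm g 2 ω).toReal) := by
        refine mul_le_mul_of_nonneg_left (mul_le_mul ?_ ?_ (Real.sqrt_nonneg _)
          (mul_nonneg (by norm_num) ENNReal.toReal_nonneg)) ENNReal.toReal_nonneg
        · apply Real.sqrt_le_iff.2 ⟨mul_nonneg (by norm_num) ENNReal.toReal_nonneg, ?_⟩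
          simp only [mul_pow, Real.sq_sqrt ENNReal.toReal_nonneg]
          refine hαr.trans ?_
          have := sq_nonneg (eLpNorm f 2 σ).toReal
          linarith
        · apply Real.sqrt_le_iff.2 ⟨ENNReal.toReal_nonneg, ?_⟩
          refine le_trans (le_of_eq ?_) hB
          exact Finset.sum_congr rfl fun F _ =>
            Real.sq_sqrt (Finset.sum_nonneg fun J _ => sq_nonneg _)
    _ = _ := by ring

/-- Control of the paraproduct form by testing. -/
theorem statement12 :
    ∃ C : ℝ, 0 < C ∧
      ∀ (σ ω : Measure ℝ), IsLocallyFiniteMeasure σ → IsLocallyFiniteMeasure ω →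
      ∀ (T : DI) (ℱ : Set DI), T ∈ ℱ → (∀ F ∈ ℱ, DI.set F ⊆ T.set) →
        (∀ F ∈ ℱ, ∑' G : fChildren ℱ F, σ (G : DI).set ≤ σ (DI.set F) / 2) →
      ∀ (f : ℝ → ℝ), MeasureTheory.MemLp f 2 σ →
      ∀ (Λ : DI → Finset DI),
        (∀ F ∈ ℱ, ∀ J ∈ Λ F, J ∈ corona ℱ F ∧
          0 < ω (DI.set (DI.left J)) ∧ 0 < ω (DI.set (DI.right J))) →
      ∀ (lam : DI → DI → ℝ),
        (∀ F ∈ ℱ, ∀ J ∈ Λ F, |lam F J| ≤ alphaF σ ℱ f F) →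
      ∀ (g : ℝ → ℝ), MeasureTheory.MemLp g 2 ω →
      ∀ t : ℝ, 0 < t →
        ENNReal.ofReal
          |∑' F : ℱ, pairH σ ω ((F : DI).set.indicator 1)
              (fun x => ∑ J ∈ Λ (F : DI), lam (F : DI) J * haar ω J g x) t| ≤
        ENNReal.ofReal C * testH σ ω * eLpNorm f 2 σ * eLpNorm g 2 ω := by
  refine ⟨14, by norm_num, ?_⟩
  intro σ ω hσ hω T ℱ hT hTℱ hch f hf Λ hΛ lam hlam g hg t ht
  by_cases hf0 : eLpNorm f 2 σ = 0
  · have hz : f =ᵐ[σ] 0 := (eLpNorm_eq_zero_iff hf.1 (by norm_num)).1 hf0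
    have hα : ∀ F, alphaF σ ℱ f F = 0 := by
      intro F
      have : ∀ G : {G : DI // G ∈ ℱ ∧ F.set ⊆ G.set}, avg σ (G : DI).set (fun x => |f x|) = 0 := by
        intro G
        unfold avg
        rw [integral_eq_zero_of_ae, zero_div]
        filter_upwards [ae_restrict_of_ae hz] with x hx
        simp [hx]
      unfold alphaF
      simp_rw [this]
      exact Real.iSup_const_zero
    have hl : ∀ F ∈ ℱ, ∀ J ∈ Λ F, lam F J = 0 := fun F hF J hJ =>
      abs_eq_zero.1 (le_antisymm ((hlam F hF J hJ).trans_eq (hα F)) (abs_nonneg _))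
    have : ∀ F : ℱ, pairH σ ω ((F : DI).set.indicator 1)
              (fun x => ∑ J ∈ Λ (F : DI), lam (F : DI) J * haar ω J g x) t = 0 := by
      intro F
      have e : (fun x => ∑ J ∈ Λ (F : DI), lam (F : DI) J * haar ω J g x) = fun _ => 0 := by
        funext x
        exact Finset.sum_eq_zero fun J hJ => by rw [hl F F.2 J hJ, zero_mul]
      rw [e]; simp [pairH]
    simp [this]
  by_cases hg0 : eLpNorm g 2 ω = 0
  · have hz : g =ᵐ[ω] 0 := (eLpNorm_eq_zero_iff hg.1 (by norm_num)).1 hg0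
    have hav : ∀ K : Set ℝ, avg ω K g = 0 := by
      intro K
      unfold avg
      rw [integral_eq_zero_of_ae (ae_restrict_of_ae hz), zero_div]
    have : ∀ F : ℱ, pairH σ ω ((F : DI).set.indicator 1)
              (fun x => ∑ J ∈ Λ (F : DI), lam (F : DI) J * haar ω J g x) t = 0 := by
      intro F
      simp [pairH, haar, hav]
    simp [this]
  by_cases hTop : testH σ ω = ⊤
  · rw [hTop, ENNReal.mul_top (by simp), ENNReal.top_mul hf0, ENNReal.top_mul hg0]
    exact le_top
  have hfin : ∀ s : Finset ℱ, |∑ F ∈ s, pairH σ ω ((F : DI).set.indicator 1)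
      (fun x => ∑ J ∈ Λ (F : DI), lam (F : DI) J * haar ω J g x) t| ≤
      14 * (testH σ ω).toReal * (eLpNorm f 2 σ).toReal * (eLpNorm g 2 ω).toReal := by
    intro s
    have := fin_sum_bound hTℱ hch hf hΛ hlam hg ht hTop (s.map (Function.Embedding.subtype _))
      (by simp only [Finset.mem_map]; rintro _ ⟨F, _, rfl⟩; exact F.2)
    rwa [Finset.sum_map] at this
  have hmain : |∑' F : ℱ, pairH σ ω ((F : DI).set.indicator 1)
      (fun x => ∑ J ∈ Λ (F : DI), lam (F : DI) J * haar ω J g x) t| ≤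
      14 * (testH σ ω).toReal * (eLpNorm f 2 σ).toReal * (eLpNorm g 2 ω).toReal := by
    by_cases hsum : Summable fun F : ℱ => pairH σ ω ((F : DI).set.indicator 1)
      (fun x => ∑ J ∈ Λ (F : DI), lam (F : DI) J * haar ω J g x) t
    · exact le_of_tendsto hsum.hasSum.abs (Filter.Eventually.of_forall hfin)
    · rw [tsum_eq_zero_of_not_summable hsum, abs_zero]; positivity
  refine (ENNReal.ofReal_le_ofReal hmain).trans_eq ?_
  rw [ENNReal.ofReal_mul (by positivity), ENNReal.ofReal_mul (by positivity),
    ENNReal.ofReal_mul (by positivity), ENNReal.ofReal_toReal hTop, ENNReal.ofReal_toReal hf.2.ne,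
    ENNReal.ofReal_toReal hg.2.ne]

end
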